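/- Let N = (S, A, T) be a P/T Petri net and R ⊆ S × S a relation on places. If (m1, m2) ∈ R⊕ and m1' ⊆ m1 (multiset inclusion), then there exists a marking m2' ⊆ m2 such that (m1', m2') ∈ R⊕ and (m1 ⊖ m1', m2 ⊖ m2') ∈ R⊕, where ⊖ denotes multiset difference. -/

import Mathlib

/-- A transition of a P/T net: a triple (pre-set, label, post-set). -/
structure PNTrans (S A : Type) where
  pre : Multiset S
  label : A
  post : Multiset S
deriving DecidableEq

/-- A P/T Petri net over places `S` and labels `A`: a finite set of transitions,
each with a nonempty pre-set. -/
structure PetriNet (S A : Type) [DecidableEq S] [DecidableEq A] where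
  T : Finset (PNTrans S A)
  pre_ne : ∀ t ∈ T, t.pre ≠ 0

/-- The additive closure `R⊕` of a place relation `R`: the least relation on markings
containing `(θ, θ)` and closed under adding `R`-related places on both sides. -/
inductive AddClosure {S : Type} (R : S → S → Prop) : Multiset S → Multiset S → Prop
  | zero : AddClosure R 0 0
  | cons {s1 s2 : S} {m1 m2 : Multiset S} :
      R s1 s2 → AddClosure R m1 m2 → AddClosure R (s1 ::ₘ m1) (s2 ::ₘ m2)

theorem addClosure_split_add {S : Type} {R : S → S → Prop} {m1 m2 : Multiset S}
    (h : AddClosure R m1 m2) : ∀ a b : Multiset S, m1 = a + b →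
      ∃ c d : Multiset S, m2 = c + d ∧ AddClosure R a c ∧ AddClosure R b d := by
  induction h with
  | zero =>
    intro a b hab
    have ha : a = 0 := by
      have := Multiset.le_add_right a b
      rw [← hab] at this
      exact Multiset.le_zero.mp this
    have hb : b = 0 := by
      have := Multiset.le_add_left b a
      rw [← hab] at this
      exact Multiset.le_zero.mp this
    subst ha hb
    exact ⟨0, 0, by simp, AddClosure.zero, AddClosure.zero⟩
  | @cons s1 s2 n1 n2 hR _ ih =>
    intro a b hab
    have hmem : s1 ∈ a + b := by
      rw [← hab]
      exact Multiset.mem_cons_self s1 n1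
    rcases Multiset.mem_add.mp hmem with ha | hb
    · obtain ⟨a', rfl⟩ := Multiset.exists_cons_of_mem ha
      rw [Multiset.cons_add, Multiset.cons_inj_right] at hab
      obtain ⟨c, d, rfl, hc, hd⟩ := ih a' b hab
      exact ⟨s2 ::ₘ c, d, (Multiset.cons_add s2 c d).symm, AddClosure.cons hR hc, hd⟩
    · obtain ⟨b', rfl⟩ := Multiset.exists_cons_of_mem hb
      rw [Multiset.add_cons, Multiset.cons_inj_right] at hab
      obtain ⟨c, d, rfl, hc, hd⟩ := ih a b' hab
      exact ⟨c, s2 ::ₘ d, (Multiset.add_cons s2 c d).symm, hc, AddClosure.cons hR hd⟩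

/-- given `(m1, m2) ∈ R⊕` and `m1' ⊆ m1`, a matching sub-marking `m2' ⊆ m2`
exists, with related remainders. -/
theorem addClosure_split {S A : Type} [Fintype S] [Fintype A]
    [DecidableEq S] [DecidableEq A] (N : PetriNet S A)
    (R : S → S → Prop) (m1 m2 m1' : Multiset S)
    (h : AddClosure R m1 m2) (hle : m1' ≤ m1) :
    ∃ m2' : Multiset S, m2' ≤ m2 ∧ AddClosure R m1' m2' ∧
      AddClosure R (m1 - m1') (m2 - m2') := by
  obtain ⟨c, d, rfl, hc, hd⟩ :=
    addClosure_split_add h m1' (m1 - m1') (add_tsub_cancel_of_le hle).symm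
  refine ⟨c, Multiset.le_add_right c d, hc, ?_⟩
  rw [add_tsub_cancel_left]
  exact hd
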